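/- Let D ⊆ ℂ be open and let B, f, f⋆, ψ⋆, ω, σ : D → ℂ be real-differentiable on D. Assume: ∂_{λ̄} f = B·conj(f), ∂_{λ̄} f⋆ = −conj(B)·conj(f⋆), ∂_{λ̄} ψ⋆ = −conj(B)·conj(ψ⋆) on D; ω satisfies ∂_λ ω = f·f⋆, ∂_{λ̄} ω = −conj(f·f⋆), conj(ω) = −ω and ω(λ) ≠ 0 on D; σ satisfies ∂_λ σ = f·ψ⋆, ∂_{λ̄} σ = −conj(f·ψ⋆) and conj(σ) = −σ on D. Then the Moutard-transformed function ψ̃⋆ := ψ⋆ − (σ/ω)·f⋆ satisfies ∂_{λ̄} ψ̃⋆ = −conj(B̃)·conj(ψ̃⋆) on D, where B̃ := B + f·conj(f⋆)/ω. -/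

import Mathlib

open Complex ComplexConjugate

/-- Wirtinger derivative `∂_{λ̄} u` of `u : ℂ → ℂ`, viewed as a real-differentiable map. -/
noncomputable def dbar (u : ℂ → ℂ) (l : ℂ) : ℂ :=
  (1 / 2 : ℂ) * ((fderiv ℝ u l) 1 + Complex.I * (fderiv ℝ u l) Complex.I)

/-- Wirtinger derivative `∂_λ u`. -/
noncomputable def dz (u : ℂ → ℂ) (l : ℂ) : ℂ :=
  (1 / 2 : ℂ) * ((fderiv ℝ u l) 1 - Complex.I * (fderiv ℝ u l) Complex.I)

theorem dbar_sub_aux {u v : ℂ → ℂ} {l : ℂ} (hu : DifferentiableAt ℝ u l)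
    (hv : DifferentiableAt ℝ v l) :
    dbar (fun w => u w - v w) l = dbar u l - dbar v l := by
  unfold dbar
  rw [(hu.hasFDerivAt.fun_sub hv.hasFDerivAt).fderiv]
  simp only [ContinuousLinearMap.sub_apply]
  ring

theorem dbar_mul_aux {u v : ℂ → ℂ} {l : ℂ} (hu : DifferentiableAt ℝ u l)
    (hv : DifferentiableAt ℝ v l) :
    dbar (fun w => u w * v w) l = u l * dbar v l + v l * dbar u l := by
  unfold dbar
  rw [(hu.hasFDerivAt.fun_mul hv.hasFDerivAt).fderiv]
  simp only [ContinuousLinearMap.add_apply, ContinuousLinearMap.smul_apply, smul_eq_mul]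
  ring

theorem dbar_inv_aux {u : ℂ → ℂ} {l : ℂ} (hu : DifferentiableAt ℝ u l) (h0 : u l ≠ 0) :
    dbar (fun w => (u w)⁻¹) l = - dbar u l / (u l) ^ 2 := by
  have h := ((hasDerivAt_inv h0).hasFDerivAt.restrictScalars ℝ).comp l hu.hasFDerivAt
  have h' : fderiv ℝ (fun w => (u w)⁻¹) l = _ := h.fderiv
  unfold dbar
  rw [h']
  simp
  ring

/-- Moutard-type transform for the conjugate equation:
`ψ̃⋆ = ψ⋆ - (σ/ω)·f⋆` satisfies `∂_{λ̄} ψ̃⋆ = -conj(B̃)·conj ψ̃⋆`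
with `B̃ = B + f·conj(f⋆)/ω`. -/
theorem moutard_transform_psi_star
    (D : Set ℂ) (hD : IsOpen D)
    (B f fs ψs ω σ : ℂ → ℂ)
    (hBdiff : ∀ l ∈ D, DifferentiableAt ℝ B l)
    (hfdiff : ∀ l ∈ D, DifferentiableAt ℝ f l)
    (hfsdiff : ∀ l ∈ D, DifferentiableAt ℝ fs l)
    (hψsdiff : ∀ l ∈ D, DifferentiableAt ℝ ψs l)
    (hωdiff : ∀ l ∈ D, DifferentiableAt ℝ ω l)
    (hσdiff : ∀ l ∈ D, DifferentiableAt ℝ σ l)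
    (hf : ∀ l ∈ D, dbar f l = B l * conj (f l))
    (hfs : ∀ l ∈ D, dbar fs l = -conj (B l) * conj (fs l))
    (hψs : ∀ l ∈ D, dbar ψs l = -conj (B l) * conj (ψs l))
    (hω1 : ∀ l ∈ D, dz ω l = f l * fs l)
    (hω2 : ∀ l ∈ D, dbar ω l = -conj (f l * fs l))
    (hω3 : ∀ l ∈ D, conj (ω l) = -ω l)
    (hω4 : ∀ l ∈ D, ω l ≠ 0)
    (hσ1 : ∀ l ∈ D, dz σ l = f l * ψs l)
    (hσ2 : ∀ l ∈ D, dbar σ l = -conj (f l * ψs l))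
    (hσ3 : ∀ l ∈ D, conj (σ l) = -σ l) :
    ∀ l ∈ D,
      dbar (fun w => ψs w - (σ w / ω w) * fs w) l =
        -conj (B l + f l * conj (fs l) / ω l) * conj (ψs l - (σ l / ω l) * fs l) := by
  intro l hl
  have h0 := hω4 l hl
  have hi : DifferentiableAt ℝ (fun w => (ω w)⁻¹) l := (hωdiff l hl).fun_inv h0
  have hq : DifferentiableAt ℝ (fun w => σ w * (ω w)⁻¹) l := (hσdiff l hl).fun_mul hi
  simp only [div_eq_mul_inv]
  rw [dbar_sub_aux (hψsdiff l hl) (hq.fun_mul (hfsdiff l hl)),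
    dbar_mul_aux hq (hfsdiff l hl), dbar_mul_aux (hσdiff l hl) hi,
    dbar_inv_aux (hωdiff l hl) h0, hψs l hl, hfs l hl, hω2 l hl, hσ2 l hl]
  simp only [map_add, map_sub, map_mul, map_inv₀, hω3 l hl, hσ3 l hl, Complex.conj_conj]
  field_simp
  ring
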